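/- Let m ≥ 4 and let e be an odd positive integer with gcd(e, 2^m − 1) = 1 and 4e ≤ 2^{m/4} − 1 (an inequality of real numbers). Define f̃ : F_{2^m} × F_{2^m} → F_2 by f̃(x,y) = Tr_1^m(y · (x⁻¹)^e). Then for all linearly independent u = (a,b) and v = (c,d) in F_{2^m} × F_{2^m}: (i) D_u D_v f̃(x,y) = 0 for all (x,y) if and only if a = 0 and c = 0; and (ii) D_u D_v f̃ is not identically equal to 1. -/

import Mathlib

/-- The second-order derivative `D_u D_v f (x) = f x + f (x+u) + f (x+v) + f (x+u+v)`. -/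
def D2 {V : Type*} [AddCommGroup V] (f : V → ZMod 2) (u v x : V) : ZMod 2 :=
  f x + f (x + u) + f (x + v) + f (x + u + v)

/-- The absolute trace map of `F_{2^m}`. -/
noncomputable def Tr (m : ℕ) (x : GaloisField 2 m) : ZMod 2 :=
  Algebra.trace (ZMod 2) (GaloisField 2 m) x

/-!
Write `φ x = x⁻¹ ^ e` and `q = |K|`. If `D_u D_v f̃` is constant for `u = (a, b)`, `v = (c, d)`, its
linear part in `y` gives `Δ_a Δ_c φ = 0`. Differences are self-adjoint for the pairing
`∑ x, f x * g x` in characteristic two, so a test function `s * L`, with `L` invariant under the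
translations at hand, only has `s` differentiated. With `s = x ^ 3` and
`L = (x (x + a) (x + c) (x + a + c)) ^ e`, this pairing equals `(a c (a + c)) ^ (e + 1)`,
because `∑ x, x⁻¹ ^ n * x ^ k` vanishes unless `n ≡ k` modulo `q - 1`. So `a = 0`, `c = 0` or
`a = c`, and a change of basis of `⟨u, v⟩` gives `a = 0`.

Then `Tr (b φ)` has a constant difference in the direction `c`. If `c ≠ 0`, take `s = x` and
`L = (x (x + c)) ^ (4 e - 1)`: among the exponents `4 e - 1, …, 8 e - 2` of `L` only `4 e` is
congruent to some `2 ^ i e`, so the pairing is `b ^ 4 c ^ (4 e - 1)`, while it must vanish because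
`s * L` has degree below `q - 1`. Hence `b = 0`, against the independence of `u` and `v`.
-/

open Polynomial
open scoped fwdDiff

theorem mem_Icc_of_mem_support_X_pow_mul {R : Type*} [Semiring R] {N k : ℕ} {Q : R[X]}
    (hk : k ∈ (X ^ N * Q).support) : k ∈ Finset.Icc N (N + Q.natDegree) := by
  rw [mem_support_iff, coeff_X_pow_mul'] at hk
  have hN : N ≤ k := by grind
  have := le_natDegree_of_ne_zero (by simpa [hN] using hk)
  grind

theorem sum_eq_sum_units_of_apply_zero {G₀ M : Type*} [GroupWithZero G₀] [Fintype G₀]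
    [DecidableEq G₀] [AddCommMonoid M] {f : G₀ → M} (hf : f 0 = 0) :
    ∑ x, f x = ∑ u : G₀ˣ, f u := by
  rw [Fintype.sum_eq_add_sum_subtype_ne f 0, hf, zero_add]
  exact (Fintype.sum_equiv unitsEquivNeZero _ _ fun _ => rfl).symm

section PowerSums

variable {K : Type*} [Field K] [Fintype K]

theorem sum_eval_eq_zero_of_natDegree_lt {P : K[X]} (hP : P.natDegree < Fintype.card K - 1) :
    ∑ x : K, P.eval x = 0 := by
  simp only [eval_eq_sum_range]
  rw [Finset.sum_comm]
  refine Finset.sum_eq_zero fun k hk => ?_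
  rw [← Finset.mul_sum, FiniteField.sum_pow_lt_card_sub_one K k (by grind), mul_zero]

theorem sum_inv_pow_mul_pow {n : ℕ} (hn : n ≠ 0) (k : ℕ) :
    ∑ x : K, x⁻¹ ^ n * x ^ k = if n ≡ k [MOD Fintype.card K - 1] then -1 else 0 := by
  classical
  obtain ⟨r, hr⟩ : ∃ r, Fintype.card K - 1 = r + 1 :=
    Nat.exists_eq_succ_of_ne_zero (Nat.sub_pos_of_lt Fintype.one_lt_card).ne'
  have inv_eq (u : Kˣ) : (u : K)⁻¹ = (u : K) ^ r := by
    refine inv_eq_of_mul_eq_one_left ?_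
    rw [← pow_succ, ← hr, FiniteField.pow_card_sub_one_eq_one _ u.ne_zero]
  have dvd_iff : r + 1 ∣ r * n + k ↔ n ≡ k [MOD r + 1] := by
    have h0 : r * n + n ≡ 0 [MOD r + 1] := Nat.modEq_zero_iff_dvd.2 ⟨n, by ring⟩
    rw [← Nat.modEq_zero_iff_dvd]
    exact ⟨fun h => (Nat.ModEq.add_left_cancel' _ (h.trans h0.symm)).symm,
      fun h => (h.symm.add_left _).trans h0⟩
  rw [sum_eq_sum_units_of_apply_zero (by simp [hn])]
  simp only [inv_eq, ← pow_mul, ← pow_add]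
  rw [FiniteField.sum_pow_units, hr]
  simp only [dvd_iff]

theorem sum_inv_pow_mul_eval {n : ℕ} (hn : n ≠ 0) {P : K[X]}
    (hP : ∀ k ∈ P.support, n ≡ k [MOD Fintype.card K - 1] → n = k) :
    ∑ x : K, x⁻¹ ^ n * P.eval x = -P.coeff n := by
  have coeff_eq (k : ℕ) (hk : k ∈ P.support) :
      ∑ x : K, x⁻¹ ^ n * (P.coeff k * x ^ k) = if k = n then -P.coeff n else 0 := by
    simp only [mul_left_comm _ (P.coeff k)]
    rw [← Finset.mul_sum, sum_inv_pow_mul_pow hn]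
    grind [Nat.ModEq.refl]
  simp only [eval_eq_sum, sum_def, Finset.mul_sum]
  rw [Finset.sum_comm, Finset.sum_congr rfl coeff_eq, Finset.sum_ite_eq']
  grind [notMem_support_iff]

theorem sum_inv_pow_mul_pow_mul_eval {n : ℕ} (hn : n ≠ 0) {Q : K[X]}
    (hQ : Q.natDegree < Fintype.card K - 1) :
    ∑ x : K, x⁻¹ ^ n * (x ^ n * Q.eval x) = -Q.eval 0 := by
  have eq_of_modEq (k : ℕ) (hk : k ∈ (X ^ n * Q).support)
      (hmod : n ≡ k [MOD Fintype.card K - 1]) : n = k := by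
    have hk := Finset.mem_Icc.1 (mem_Icc_of_mem_support_X_pow_mul hk)
    have := Nat.eq_zero_of_dvd_of_lt ((Nat.modEq_iff_dvd' hk.1).1 hmod) (by omega)
    omega
  simpa [coeff_X_pow_mul', coeff_zero_eq_eval_zero] using sum_inv_pow_mul_eval hn eq_of_modEq

end PowerSums

section Differences

theorem sum_fwdDiff_mul {G R : Type*} [AddCommGroup G] [Fintype G] [NonUnitalNonAssocRing R]
    (h : G) (f g : G → R) : ∑ x, Δ_[h] f x * g x = ∑ x, f x * Δ_[-h] g x := by
  simp only [fwdDiff, sub_mul, mul_sub, Finset.sum_sub_distrib]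
  congr 1
  exact Fintype.sum_equiv (Equiv.addRight h) _ _ fun x => by simp

theorem fwdDiff_mul_of_periodic {M R : Type*} [AddCommMonoid M] [NonUnitalNonAssocRing R] {h : M}
    (f : M → R) {g : M → R} (hg : g.Periodic h) : Δ_[h] (f * g) = Δ_[h] f * g := by
  ext x
  simp only [fwdDiff, Pi.mul_apply, hg x, sub_mul]

variable {R : Type*} [CommRing R] [CharP R 2]

theorem fwdDiff_fwdDiff_cube (a c : R) :
    Δ_[a] (Δ_[c] fun x => x ^ 3) = fun _ => a * c * (a + c) := by
  ext x
  simp only [fwdDiff]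
  linear_combination (3 * a * c * x + a * c * (a + c)) * CharTwo.two_eq_zero (R := R)

variable [Fintype R] {a c : R} {g : R → R}

theorem sum_fwdDiff_mul_id_mul (f : R → R) (ha : g.Periodic a) :
    ∑ x, Δ_[a] f x * (x * g x) = a * ∑ x, f x * g x := by
  calc ∑ x, Δ_[a] f x * (x * g x) = ∑ x, f x * Δ_[a] (id * g) x := by
        rw [← CharTwo.neg_eq a, ← sum_fwdDiff_mul, CharTwo.neg_eq]
        rfl
    _ = a * ∑ x, f x * g x := by
        rw [fwdDiff_mul_of_periodic _ ha, Finset.mul_sum]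
        simp [fwdDiff, mul_left_comm]

theorem sum_fwdDiff_fwdDiff_mul_cube_mul (f : R → R) (ha : g.Periodic a) (hc : g.Periodic c) :
    ∑ x, Δ_[a] (Δ_[c] f) x * (x ^ 3 * g x) = a * c * (a + c) * ∑ x, f x * g x := by
  calc ∑ x, Δ_[a] (Δ_[c] f) x * (x ^ 3 * g x)
      = ∑ x, f x * Δ_[c] (Δ_[a] ((fun x => x ^ 3) * g)) x := by
        rw [← CharTwo.neg_eq c, ← sum_fwdDiff_mul, ← CharTwo.neg_eq a, ← sum_fwdDiff_mul,
          CharTwo.neg_eq, CharTwo.neg_eq]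
        rfl
    _ = a * c * (a + c) * ∑ x, f x * g x := by
        rw [fwdDiff_mul_of_periodic _ ha, fwdDiff_mul_of_periodic _ hc, fwdDiff_fwdDiff_cube,
          Finset.mul_sum]
        exact Finset.sum_congr rfl fun x _ => by simp only [Pi.mul_apply]; ring

end Differences

theorem eq_zero_or_eq_zero_or_eq_of_fwdDiff_fwdDiff_inv_pow_eq_zero {K : Type*} [Field K]
    [Fintype K] [CharP K 2] {e : ℕ} {a c : K} (he : e ≠ 0) (hcard : 3 * e < Fintype.card K - 1)
    (h : Δ_[a] (Δ_[c] fun x : K => x⁻¹ ^ e) = 0) : a = 0 ∨ c = 0 ∨ a = c := by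
  let Q : K[X] := ((X + C a) * ((X + C c) * (X + C c + C a))) ^ e
  have natDegree_lt : Q.natDegree < Fintype.card K - 1 := by
    refine lt_of_le_of_lt ?_ hcard
    rw [mul_comm]
    exact natDegree_pow_le_of_le e (by compute_degree)
  have eval_eq (x : K) : x ^ e * Q.eval x = (x * (x + a) * ((x + c) * (x + c + a))) ^ e := by
    simp only [Q, eval_mul, eval_pow, eval_add, eval_X, eval_C, ← mul_pow, mul_assoc]
  have periodic_a : (fun x => x ^ e * Q.eval x).Periodic a := fun x => by
    simp only [eval_eq, add_right_comm x a c, CharTwo.add_cancel_right]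
    ring
  have periodic_c : (fun x => x ^ e * Q.eval x).Periodic c := fun x => by
    simp only [eval_eq, add_right_comm x c a, CharTwo.add_cancel_right]
    ring
  have key : a * c * (a + c) * -Q.eval 0 = 0 := by
    rw [← sum_inv_pow_mul_pow_mul_eval he natDegree_lt,
      ← sum_fwdDiff_fwdDiff_mul_cube_mul _ periodic_a periodic_c]
    simp only [h, Pi.zero_apply, zero_mul, Finset.sum_const_zero]
  simp only [Q, eval_mul, eval_pow, eval_add, eval_X, eval_C, zero_add, mul_neg, neg_eq_zero,
    mul_eq_zero, pow_eq_zero_iff he, add_comm c a, CharTwo.add_eq_zero] at key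
  tauto

/- Multiplication by `2 ^ i` modulo `2 ^ m - 1` rotates binary digits. If some digit of `e` wraps
around, then `2 ^ (m - i) ≤ e`, and rotating back gives `N * 2 ^ (m - i) = e`, against `e < N`. -/
theorem eq_of_mul_two_pow_modEq {m e i N : ℕ} (he : 0 < e) (hi : i < m) (heN : e < N)
    (hN : N * e < 2 ^ m - 1) (h : e * 2 ^ i ≡ N [MOD 2 ^ m - 1]) : e * 2 ^ i = N := by
  have hN' : N < 2 ^ m - 1 := by nlinarith
  obtain ⟨j, rfl⟩ := Nat.exists_eq_add_of_lt hi
  have two_pow_eq : 2 ^ (i + j + 1) = 2 ^ i * 2 ^ (j + 1) := by ring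
  by_cases hej : e < 2 ^ (j + 1)
  · refine h.eq_of_lt_of_lt ?_ hN'
    have : (e + 1) * 2 ^ i ≤ 2 ^ (i + j + 1) := by nlinarith [Nat.two_pow_pos i]
    rcases i.eq_zero_or_pos with rfl | hi0
    · omega
    · have := Nat.one_lt_two_pow hi0.ne'
      grind
  · have mul_modEq : N * 2 ^ (j + 1) ≡ e [MOD 2 ^ (i + j + 1) - 1] := by
      calc N * 2 ^ (j + 1) ≡ e * 2 ^ i * 2 ^ (j + 1) [MOD 2 ^ (i + j + 1) - 1] :=
            (h.mul_right _).symm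
        _ = e * 2 ^ (i + j + 1) := by rw [two_pow_eq, mul_assoc]
        _ ≡ e * 1 [MOD 2 ^ (i + j + 1) - 1] := (Nat.modEq_sub Nat.one_le_two_pow).mul_left e
        _ = e := mul_one e
    have : N * 2 ^ (j + 1) = e :=
      mul_modEq.eq_of_lt_of_lt (by nlinarith) (by omega)
    nlinarith [Nat.two_pow_pos (j + 1)]

section TestPolynomial

variable {R : Type*} [Semiring R] {a : R}

theorem mem_Icc_of_mem_support_X_pow_mul_X_add_C_pow {n k : ℕ}
    (hk : k ∈ (X ^ n * (X + C a) ^ n).support) : k ∈ Finset.Icc n (n + n) := by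
  have natDegree_le : ((X + C a) ^ n).natDegree ≤ n := by compute_degree
  exact Finset.Icc_subset_Icc_right (by omega) (mem_Icc_of_mem_support_X_pow_mul hk)

theorem coeff_mul_two_pow_X_pow_mul_X_add_C_pow [CharP R 2] {e : ℕ} (he : 0 < e) (i : ℕ) :
    (X ^ (4 * e - 1) * (X + C a) ^ (4 * e - 1)).coeff (e * 2 ^ i) =
      if i = 2 then a ^ (4 * e - 2) else 0 := by
  split_ifs with hi
  · have natCast_eq_one : ((4 * e - 1 : ℕ) : R) = 1 := by
      rw [CharTwo.natCast_eq_ite, if_neg (by grind)]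
    rw [hi, show e * 2 ^ 2 = 1 + (4 * e - 1) by omega, coeff_X_pow_mul, coeff_X_add_C_pow,
      Nat.choose_one_right, natCast_eq_one, mul_one, Nat.sub_sub]
  · by_contra hne
    have hk := Finset.mem_Icc.1
      (mem_Icc_of_mem_support_X_pow_mul_X_add_C_pow (mem_support_iff.2 hne))
    have two_lt : 2 ^ 1 < 2 ^ i := by
      by_contra! hle
      have := Nat.mul_le_mul_left e hle
      omega
    have lt_eight : 2 ^ i < 2 ^ 3 := by
      by_contra! hle
      have := Nat.mul_le_mul_left e hle
      omega
    rw [Nat.pow_lt_pow_iff_right one_lt_two] at two_lt lt_eight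
    omega

end TestPolynomial

section Trace

variable {K : Type*} [Field K] [Fintype K] [Algebra (ZMod 2) K] {e : ℕ} {a d : K}

theorem card_eq_two_pow_finrank : Fintype.card K = 2 ^ Module.finrank (ZMod 2) K := by
  rw [Module.card_eq_pow_finrank (K := ZMod 2), ZMod.card]

theorem sum_trace_mul_inv_pow_mul (e : ℕ) (d : K) (g : K → K) :
    ∑ x : K, algebraMap (ZMod 2) K (Algebra.trace (ZMod 2) K (d * x⁻¹ ^ e)) * g x =
      ∑ i ∈ Finset.range (Module.finrank (ZMod 2) K),
        d ^ 2 ^ i * ∑ x : K, x⁻¹ ^ (e * 2 ^ i) * g x := by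
  simp only [FiniteField.algebraMap_trace_eq_sum_pow, Nat.card_zmod, Finset.sum_mul, Finset.mul_sum]
  rw [Finset.sum_comm]
  simp only [mul_pow, pow_mul, mul_assoc]

theorem sum_inv_pow_mul_two_pow_mul_eval (he : 0 < e) (hcard : 8 * e ^ 2 < Fintype.card K) {i : ℕ}
    (hi : i < Module.finrank (ZMod 2) K) :
    ∑ x : K, x⁻¹ ^ (e * 2 ^ i) * (X ^ (4 * e - 1) * (X + C a) ^ (4 * e - 1)).eval x =
      if i = 2 then a ^ (4 * e - 2) else 0 := by
  have : CharP K 2 := charP_of_injective_algebraMap' (ZMod 2) 2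
  rw [sum_inv_pow_mul_eval (by positivity), CharTwo.neg_eq,
    coeff_mul_two_pow_X_pow_mul_X_add_C_pow he]
  intro k hk hmod
  have hk := Finset.mem_Icc.1 (mem_Icc_of_mem_support_X_pow_mul_X_add_C_pow hk)
  rw [card_eq_two_pow_finrank] at hmod hcard
  refine eq_of_mul_two_pow_modEq he hi (by omega) ?_ hmod
  have : k * e + 2 * e ≤ 8 * e ^ 2 := by
    nlinarith [Nat.mul_le_mul_right e (show k + 2 ≤ 8 * e by omega)]
  omega

theorem sum_trace_mul_inv_pow_mul_eval (he : 0 < e) (hcard : 8 * e ^ 2 < Fintype.card K) :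
    ∑ x : K, algebraMap (ZMod 2) K (Algebra.trace (ZMod 2) K (d * x⁻¹ ^ e)) *
      (X ^ (4 * e - 1) * (X + C a) ^ (4 * e - 1)).eval x = d ^ 4 * a ^ (4 * e - 2) := by
  have two_lt : 2 < Module.finrank (ZMod 2) K := by
    rw [card_eq_two_pow_finrank] at hcard
    by_contra! hle
    have := Nat.pow_le_pow_right two_pos hle
    nlinarith
  rw [sum_trace_mul_inv_pow_mul, Finset.sum_eq_single_of_mem 2 (Finset.mem_range.2 two_lt)]
  · rw [sum_inv_pow_mul_two_pow_mul_eval he hcard two_lt, if_pos rfl]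
    norm_num
  · intro i hi hi2
    rw [sum_inv_pow_mul_two_pow_mul_eval he hcard (Finset.mem_range.1 hi), if_neg hi2, mul_zero]

theorem eq_zero_of_fwdDiff_trace_mul_inv_pow_eq_const (he : 0 < e)
    (hcard : 8 * e ^ 2 < Fintype.card K) (ha : a ≠ 0) {κ : ZMod 2}
    (h : ∀ x, Δ_[a] (fun x : K => Algebra.trace (ZMod 2) K (d * x⁻¹ ^ e)) x = κ) : d = 0 := by
  have : CharP K 2 := charP_of_injective_algebraMap' (ZMod 2) 2
  let P : K[X] := X ^ (4 * e - 1) * (X + C a) ^ (4 * e - 1)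
  have periodic : (P.eval ·).Periodic a := fun x => by
    simp [P, CharTwo.add_cancel_right, mul_comm]
  have natDegree_lt : (X * P).natDegree < Fintype.card K - 1 := by
    have : (X * P).natDegree ≤ 1 + (4 * e - 1 + (4 * e - 1)) := by
      simp only [P]
      compute_degree
    have : e ≤ e ^ 2 := Nat.le_self_pow two_ne_zero e
    omega
  have fwdDiff_eq (x : K) :
      Δ_[a] (fun x => algebraMap (ZMod 2) K (Algebra.trace (ZMod 2) K (d * x⁻¹ ^ e))) x =
        algebraMap (ZMod 2) K κ := by
    rw [← h x, fwdDiff, fwdDiff, map_sub]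
  have key : a * (d ^ 4 * a ^ (4 * e - 2)) = 0 := by
    rw [← sum_trace_mul_inv_pow_mul_eval he hcard, ← sum_fwdDiff_mul_id_mul _ periodic]
    have := sum_eval_eq_zero_of_natDegree_lt natDegree_lt
    simp only [eval_mul (p := X), eval_X] at this
    simp only [fwdDiff_eq]
    rw [← Finset.mul_sum, this, mul_zero]
  simpa [ha] using key

end Trace

section SecondDerivative

variable {V : Type*} [AddCommGroup V]

theorem D2_comm (f : V → ZMod 2) (u v : V) : D2 f u v = D2 f v u := by
  ext x
  simp only [D2, add_right_comm x u v, add_right_comm (f x)]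

theorem D2_add_left [Module (ZMod 2) V] (f : V → ZMod 2) (u v : V) :
    D2 f (u + v) v = D2 f u v := by
  ext x
  have : v + v = 0 := ZModModule.add_self v
  simp only [D2, ← add_assoc]
  rw [add_assoc (x + u) v v, this, add_zero]
  ring

end SecondDerivative

section Monomial

variable {K : Type*} [Field K] [Algebra (ZMod 2) K] {e : ℕ} {a b c d : K}

/-- The generalized `PS_ap` monomial `(x, y) ↦ Tr(y x^{-e})` over a field `K` of characteristic two;
`0⁻¹ = 0` makes it vanish on `{0} × K` when `e ≠ 0`. -/
noncomputable def gPSapMonomial (e : ℕ) (p : K × K) : ZMod 2 :=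
  Algebra.trace (ZMod 2) K (p.2 * p.1⁻¹ ^ e)

theorem D2_gPSapMonomial (e : ℕ) (a b c d x y : K) :
    D2 (gPSapMonomial e) (a, b) (c, d) (x, y) =
      Algebra.trace (ZMod 2) K (y * Δ_[a] (Δ_[c] fun x : K => x⁻¹ ^ e) x +
        (b * (x + a)⁻¹ ^ e + d * (x + c)⁻¹ ^ e + (b + d) * (x + a + c)⁻¹ ^ e)) := by
  have : CharP K 2 := charP_of_injective_algebraMap' (ZMod 2) 2
  simp only [D2, gPSapMonomial, fwdDiff, Prod.mk_add_mk, ← map_add, CharTwo.sub_eq_add]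
  congr 1
  ring

theorem D2_gPSapMonomial_zero_fst (e : ℕ) (b c d x y : K) :
    D2 (gPSapMonomial e) (0, b) (c, d) (x, y) =
      Δ_[c] (fun x => Algebra.trace (ZMod 2) K (b * x⁻¹ ^ e)) x := by
  have : CharP K 2 := charP_of_injective_algebraMap' (ZMod 2) 2
  simp only [D2_gPSapMonomial, fwdDiff, add_zero, sub_self, CharTwo.sub_eq_add, ← map_add]
  congr 1
  linear_combination d * (x + c)⁻¹ ^ e * CharTwo.two_eq_zero (R := K)

variable [Fintype K] {κ : ZMod 2}

theorem fst_eq_zero_or_eq_of_D2_gPSapMonomial_eq_const (he : e ≠ 0)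
    (hcard : 3 * e < Fintype.card K - 1)
    (h : ∀ p, D2 (gPSapMonomial e) (a, b) (c, d) p = κ) : a = 0 ∨ c = 0 ∨ a = c := by
  have : CharP K 2 := charP_of_injective_algebraMap' (ZMod 2) 2
  refine eq_zero_or_eq_zero_or_eq_of_fwdDiff_fwdDiff_inv_pow_eq_zero he hcard (funext fun x => ?_)
  refine (traceForm_nondegenerate (ZMod 2) K).1 _ fun y => ?_
  have := (h (x, y)).trans (h (x, 0)).symm
  rw [D2_gPSapMonomial, D2_gPSapMonomial, map_add, zero_mul, zero_add] at this
  rw [Algebra.traceForm_apply, mul_comm]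
  exact add_eq_right.1 this

theorem fst_eq_zero_of_D2_gPSapMonomial_zero_fst_eq_const (he : 0 < e)
    (hcard : 8 * e ^ 2 < Fintype.card K) (hb : b ≠ 0)
    (h : ∀ p, D2 (gPSapMonomial e) (0, b) (c, d) p = κ) : c = 0 := by
  by_contra hc
  refine hb (eq_zero_of_fwdDiff_trace_mul_inv_pow_eq_const he hcard hc (κ := κ) fun x => ?_)
  rw [← h (x, 0), D2_gPSapMonomial_zero_fst]

theorem fst_eq_zero_of_D2_gPSapMonomial_eq_const (he : 0 < e) (hcard : 8 * e ^ 2 < Fintype.card K)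
    (hli : LinearIndependent (ZMod 2) ![(a, b), (c, d)])
    (h : ∀ p, D2 (gPSapMonomial e) (a, b) (c, d) p = κ) : a = 0 ∧ c = 0 := by
  have : CharP K 2 := charP_of_injective_algebraMap' (ZMod 2) 2
  have hcard' : 3 * e < Fintype.card K - 1 := by
    have : e ≤ e ^ 2 := Nat.le_self_pow two_ne_zero e
    omega
  have hu : (a, b) ≠ 0 := hli.ne_zero 0
  have hv : (c, d) ≠ 0 := hli.ne_zero 1
  have huv : (a, b) ≠ (c, d) := hli.injective.ne (zero_ne_one (α := Fin 2))
  rcases fst_eq_zero_or_eq_of_D2_gPSapMonomial_eq_const he.ne' hcard' h with rfl | rfl | rfl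
  · have hb : b ≠ 0 := by simpa using hu
    exact ⟨rfl, fst_eq_zero_of_D2_gPSapMonomial_zero_fst_eq_const he hcard hb h⟩
  · have hd : d ≠ 0 := by simpa using hv
    rw [D2_comm] at h
    exact ⟨fst_eq_zero_of_D2_gPSapMonomial_zero_fst_eq_const he hcard hd h, rfl⟩
  · have hbd : b + d ≠ 0 := by simpa [CharTwo.add_eq_zero] using huv
    rw [← D2_add_left, Prod.mk_add_mk, CharTwo.add_self_eq_zero] at h
    exact and_self_iff.2 (fst_eq_zero_of_D2_gPSapMonomial_zero_fst_eq_const he hcard hbd h)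

end Monomial

theorem eight_mul_sq_lt_two_pow_of_le_rpow {m e : ℕ} (h : (4 * e : ℝ) ≤ 2 ^ ((m : ℝ) / 4) - 1) :
    8 * e ^ 2 < 2 ^ m := by
  have rpow_pow : ((2 : ℝ) ^ ((m : ℝ) / 4)) ^ 4 = 2 ^ m := by
    rw [← Real.rpow_mul_natCast zero_le_two, Nat.cast_ofNat, div_mul_cancel₀ _ four_ne_zero,
      Real.rpow_natCast]
  have : (4 * e + 1 : ℝ) ^ 4 ≤ 2 ^ m := by
    rw [← rpow_pow]
    gcongr
    linarith
  have : (4 * e + 1) ^ 4 ≤ 2 ^ m := mod_cast this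
  nlinarith [Nat.zero_le (e ^ 4), Nat.zero_le (e ^ 3)]

theorem gPSap_monomial_decomposition_general {K : Type*} [Field K] [Finite K] [Algebra (ZMod 2) K]
    {e : ℕ} (he : 0 < e) (hcard : 8 * e ^ 2 < Nat.card K) {a b c d : K}
    (hli : LinearIndependent (ZMod 2) ![(a, b), (c, d)]) :
    ((∀ p, D2 (gPSapMonomial e) (a, b) (c, d) p = 0) ↔ a = 0 ∧ c = 0) ∧
      ¬ ∀ p, D2 (gPSapMonomial e) (a, b) (c, d) p = 1 := by
  have := Fintype.ofFinite K
  rw [Nat.card_eq_fintype_card] at hcard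
  have fst_eq_zero {κ : ZMod 2} := fst_eq_zero_of_D2_gPSapMonomial_eq_const (κ := κ) he hcard hli
  have D2_eq_zero (hac : a = 0 ∧ c = 0) (p : K × K) :
      D2 (gPSapMonomial e) (a, b) (c, d) p = 0 := by
    rw [hac.1, hac.2, D2_gPSapMonomial_zero_fst, fwdDiff, add_zero, sub_self]
  refine ⟨⟨fst_eq_zero, D2_eq_zero⟩, fun h => ?_⟩
  exact one_ne_zero ((h 0).symm.trans (D2_eq_zero (fst_eq_zero h) 0))

/-- Corollary 4.7 (second-order derivative form): for `f̃(x,y) = Tr(y x^{-e})` with `e` odd,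
`gcd(e, 2^m-1) = 1` and `4e ≤ 2^{m/4} - 1`, and linearly independent `u = (a,b)`,
`v = (c,d)`: the second-order derivative `D_u D_v f̃` vanishes identically iff
`a = c = 0`, and `D_u D_v f̃` is never identically `1`. -/
theorem gPSap_monomial_decomposition
    (m : ℕ) (hm : 4 ≤ m) (e : ℕ) (he : 0 < e) (heodd : Odd e)
    (hgcd : Nat.gcd e (2 ^ m - 1) = 1)
    (hbound : (4 * e : ℝ) ≤ 2 ^ ((m : ℝ) / 4) - 1)
    (f : GaloisField 2 m × GaloisField 2 m → ZMod 2)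
    (hf : ∀ x y, f (x, y) = Tr m (y * (x⁻¹) ^ e)) :
    ∀ a b c d : GaloisField 2 m,
      LinearIndependent (ZMod 2) ![((a, b) : GaloisField 2 m × GaloisField 2 m), (c, d)] →
      ((∀ p : GaloisField 2 m × GaloisField 2 m, D2 f (a, b) (c, d) p = 0) ↔
          (a = 0 ∧ c = 0)) ∧
      ¬ (∀ p : GaloisField 2 m × GaloisField 2 m, D2 f (a, b) (c, d) p = 1) := by
  obtain rfl : f = gPSapMonomial e := funext fun p => hf p.1 p.2
  exact fun _ _ _ _ => gPSap_monomial_decomposition_general he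
    (by simpa [GaloisField.card 2 m (by omega)] using eight_mul_sq_lt_two_pow_of_le_rpow hbound)
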